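/- arXiv:1709.04907 — 7 statements merged into one kernel-verified Lean document; each statement's English description precedes it below -/
import Mathlib

section
/- Let A', A, B', B be finite nonempty types. Let ρ : Matrix (A' × A × B') (A' × A × B') ℂ and J : Matrix (A × B) (A × B) ℂ be positive semidefinite. Suppose C, D : Matrix (A' × A × B') (A' × A × B') ℂ are positive semidefinite with ρ ≤ T_{B'}(C − D), and V, Y : Matrix (A × B) (A × B) ℂ are positive semidefinite with J ≤ T_B(V − Y), and μ : ℝ satisfies Tr_B(V + Y) ≤ μ • (1 : Matrix A A ℂ). Define ω : Matrix (A' × B × B') (A' × B × B') ℂ by ω (a',b,b') (â',b̂,b̂') = ∑_{a,â} ρ (a',a,b') (â',â,b̂') * J (a,b) (â,b̂). Then there exist positive semidefinite E, F : Matrix (A' × B × B') (A' × B × B') ℂ such that ω ≤ T_{BB'}(E − F) and Re(trace(E + F)) ≤ μ * Re(trace(C + D)). (This is the feasibility-transfer form of Proposition 1: amortization does not enhance the max-Rains information; here J plays the role of the Choi operator of the channel and ω = N(ρ).) -/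
open Matrix ComplexOrder

noncomputable section

/-- Partial transpose over the last (`γ`) factor of a matrix on `α × β × γ`:
`T_γ(X) (a,b,c) (a',b',c') = X (a,b,c') (a',b',c)`. -/
def ptLast {α β γ : Type*} (X : Matrix (α × β × γ) (α × β × γ) ℂ) :
    Matrix (α × β × γ) (α × β × γ) ℂ :=
  Matrix.of fun x y => X (x.1, x.2.1, y.2.2) (y.1, y.2.1, x.2.2)

/-- Partial transpose over `β` of a matrix on `α × β`:
`T_β(X) (a,b) (a',b') = X (a,b') (a',b)`. -/
def ptSnd {α β : Type*} (X : Matrix (α × β) (α × β) ℂ) : Matrix (α × β) (α × β) ℂ :=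
  Matrix.of fun x y => X (x.1, y.2) (y.1, x.2)

/-- Joint partial transpose over `β` and `γ` of a matrix on `α × β × γ`:
`T_{βγ}(X) (a,b,c) (a',b',c') = X (a,b',c') (a',b,c)`. -/
def ptBoth {α β γ : Type*} (X : Matrix (α × β × γ) (α × β × γ) ℂ) :
    Matrix (α × β × γ) (α × β × γ) ℂ :=
  Matrix.of fun x y => X (x.1, y.2.1, y.2.2) (y.1, x.2.1, x.2.2)

/-- Partial trace over the second factor: `(Tr_β X) a a' = ∑ b, X (a,b) (a',b)`. -/
def ptrSnd {α β : Type*} [Fintype β] (X : Matrix (α × β) (α × β) ℂ) : Matrix α α ℂ :=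
  Matrix.of fun a a' => ∑ b, X (a, b) (a', b)

/-!
Write `X * Z` for the link product contracting the shared factor `A`, so that `ω = ρ * J`. The
product is bilinear, preserves positivity by the Schur product theorem, and carries `T_{B'}` on
the left and `T_B` on the right to `T_{BB'}`. For `E = C * V + D * Y` and
`F = C * Y + D * V` one has `E - F = (C - D) * (V - Y)` and
`E + F = (C + D) * (V + Y)`. With `P = T_{B'}(C - D)` and `Q = T_B(V - Y)`, the first identity gives
`T_{BB'}(E - F) - ω = P * Q - ρ * J = (P - ρ) * J + P * (Q - J) ≥ 0`. The second gives the trace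
bound, because `Tr (X * Z)` depends on `Z` only through its partial trace over `B`, monotonically
when `X ≥ 0`.
-/

section BlockSum

variable {ι κ R : Type*}

/-- The matrix on `ι` obtained from a matrix on `ι × κ` by adding up all the entries of each
`κ × κ` block. The contraction in a link product is a block sum. -/
def blockSum [Fintype κ] [AddCommMonoid R] (M : Matrix (ι × κ) (ι × κ) R) : Matrix ι ι R :=
  of fun i j => ∑ k, ∑ l, M (i, k) (j, l)

variable [Ring R] [PartialOrder R] [StarRing R]

lemma posSemidef_blockSum [Fintype κ] {M : Matrix (ι × κ) (ι × κ) R} (hM : M.PosSemidef) :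
    (blockSum M).PosSemidef := by
  refine ⟨?_, fun v => ?_⟩
  · ext i j
    simp only [blockSum, conjTranspose_apply, of_apply, star_sum, hM.isHermitian.apply]
    exact Finset.sum_comm
  · let w : ι × κ →₀ R := Finsupp.onFinset (v.support ×ˢ Finset.univ) (fun p => v p.1) (by simp)
    have sum_w (g : ι × κ → R → R) (hg : ∀ p, g p 0 = 0) :
        w.sum g = ∑ i ∈ v.support, ∑ k, g (i, k) (v i) := by
      rw [Finsupp.onFinset_sum _ hg, Finset.sum_product]
    have quadraticForm_eq : (w.sum fun p wp => w.sum fun q wq => star wp * M p q * wq) =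
        v.sum fun i vi => v.sum fun j vj => star vi * blockSum M i j * vj := by
      rw [sum_w _ (by simp)]
      refine Finset.sum_congr rfl fun i _ => ?_
      simp only [sum_w _ (fun _ => mul_zero _), blockSum, of_apply, Finset.mul_sum, Finset.sum_mul]
      exact Finset.sum_comm
    exact quadraticForm_eq ▸ hM.2 w

lemma sum_sum_nonneg_of_posSemidef [Fintype ι] {M : Matrix ι ι R} (hM : M.PosSemidef) :
    0 ≤ ∑ i, ∑ j, M i j := by
  simpa [dotProduct, mulVec] using hM.dotProduct_mulVec_nonneg 1

end BlockSum

section MiddleMarginal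

variable {α β γ R : Type*} [Fintype α] [Fintype γ]

/-- The partial trace over the two outer factors of a matrix on `α × β × γ`: the marginal on `β`,
on which the trace of a link product depends. -/
def middleMarginal [AddCommMonoid R] (X : Matrix (α × β × γ) (α × β × γ) R) : Matrix β β R :=
  ∑ a, ∑ c, X.submatrix (fun b => (a, b, c)) (fun b => (a, b, c))

lemma middleMarginal_apply [AddCommMonoid R] (X : Matrix (α × β × γ) (α × β × γ) R) (b b' : β) :
    middleMarginal X b b' = ∑ a, ∑ c, X (a, b, c) (a, b', c) := by
  simp only [middleMarginal, Matrix.sum_apply, submatrix_apply]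

lemma posSemidef_middleMarginal [Ring R] [PartialOrder R] [StarRing R] [AddLeftMono R]
    {X : Matrix (α × β × γ) (α × β × γ) R} (hX : X.PosSemidef) :
    (middleMarginal X).PosSemidef :=
  posSemidef_sum _ fun _ _ => posSemidef_sum _ fun _ _ => hX.submatrix _

lemma trace_middleMarginal [Fintype β] [AddCommMonoid R]
    (X : Matrix (α × β × γ) (α × β × γ) R) : (middleMarginal X).trace = X.trace := by
  simp only [trace, diag_apply, middleMarginal_apply, Fintype.sum_prod_type]
  exact Finset.sum_comm

end MiddleMarginal

section LinkProduct

variable {α β γ δ : Type*} [Fintype β]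

/-- The link product of a matrix on `α × β × γ` with a matrix on `β × δ`, contracting the shared
factor `β`, as a bilinear map. When the second matrix is the Choi operator of a channel from `β`
to `δ`, the link product applies that channel to the middle factor of the first. -/
def linkProduct {R : Type*} [CommSemiring R] :
    Matrix (α × β × γ) (α × β × γ) R →ₗ[R] Matrix (β × δ) (β × δ) R →ₗ[R]
      Matrix (α × δ × γ) (α × δ × γ) R :=
  LinearMap.mk₂ R
    (fun X Z => of fun x y => ∑ b, ∑ b',
      X (x.1, b, x.2.2) (y.1, b', y.2.2) * Z (b, x.2.1) (b', y.2.1))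
    (fun _ _ _ => by ext; simp [add_mul, Finset.sum_add_distrib])
    (fun _ _ _ => by ext; simp [mul_assoc, Finset.mul_sum])
    (fun _ _ _ => by ext; simp [mul_add, Finset.sum_add_distrib])
    (fun _ _ _ => by ext; simp [mul_left_comm, Finset.mul_sum])

lemma linkProduct_apply {R : Type*} [CommSemiring R] (X : Matrix (α × β × γ) (α × β × γ) R)
    (Z : Matrix (β × δ) (β × δ) R) (x y : α × δ × γ) :
    linkProduct X Z x y = ∑ b, ∑ b',
      X (x.1, b, x.2.2) (y.1, b', y.2.2) * Z (b, x.2.1) (b', y.2.1) :=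
  rfl

lemma linkProduct_eq_blockSum_hadamard {R : Type*} [CommSemiring R]
    (X : Matrix (α × β × γ) (α × β × γ) R) (Z : Matrix (β × δ) (β × δ) R) :
    let e : (α × δ × γ) × β → α × β × γ := fun p => (p.1.1, p.2, p.1.2.2)
    let f : (α × δ × γ) × β → β × δ := fun p => (p.2, p.1.2.1)
    linkProduct X Z = blockSum (X.submatrix e e ⊙ Z.submatrix f f) :=
  rfl

section Positivity

variable {𝕜 : Type*} [RCLike 𝕜]
  {X X' : Matrix (α × β × γ) (α × β × γ) 𝕜} {Z Z' : Matrix (β × δ) (β × δ) 𝕜}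

lemma posSemidef_linkProduct (hX : X.PosSemidef) (hZ : Z.PosSemidef) :
    (linkProduct X Z).PosSemidef := by
  rw [linkProduct_eq_blockSum_hadamard]
  exact posSemidef_blockSum ((hX.submatrix _).hadamard (hZ.submatrix _))

lemma posSemidef_linkProduct_sub_linkProduct (hX : X.PosSemidef) (hXX' : (X' - X).PosSemidef)
    (hZ : Z.PosSemidef) (hZZ' : (Z' - Z).PosSemidef) :
    (linkProduct X' Z' - linkProduct X Z).PosSemidef := by
  have hX' : X'.PosSemidef := by simpa using hXX'.add hX
  have decomposition : linkProduct X' Z' - linkProduct X Z =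
      linkProduct (X' - X) Z + linkProduct X' (Z' - Z) := by
    simp only [map_sub, LinearMap.sub_apply]
    abel
  rw [decomposition]
  exact (posSemidef_linkProduct hXX' hZ).add (posSemidef_linkProduct hX' hZZ')

end Positivity

lemma ptBoth_linkProduct (X : Matrix (α × β × γ) (α × β × γ) ℂ) (Z : Matrix (β × δ) (β × δ) ℂ) :
    ptBoth (linkProduct X Z) = linkProduct (ptLast X) (ptSnd Z) :=
  rfl

section Trace

variable [Fintype α] [Fintype γ] [Fintype δ]

lemma trace_linkProduct (X : Matrix (α × β × γ) (α × β × γ) ℂ) (Z : Matrix (β × δ) (β × δ) ℂ) :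
    (linkProduct X Z).trace = ∑ b, ∑ b', (middleMarginal X ⊙ ptrSnd Z) b b' := by
  simp only [trace, diag_apply, linkProduct_apply]
  rw [Finset.sum_comm]
  refine Finset.sum_congr rfl fun b _ => ?_
  rw [Finset.sum_comm]
  refine Finset.sum_congr rfl fun b' _ => ?_
  simp only [hadamard_apply, middleMarginal_apply, ptrSnd, of_apply, Fintype.sum_prod_type,
    Finset.sum_mul, Finset.mul_sum]
  exact Finset.sum_comm

lemma trace_linkProduct_le [DecidableEq β] {X : Matrix (α × β × γ) (α × β × γ) ℂ}
    {Z : Matrix (β × δ) (β × δ) ℂ} {μ : ℝ} (hX : X.PosSemidef)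
    (hZ : (μ • (1 : Matrix β β ℂ) - ptrSnd Z).PosSemidef) :
    (linkProduct X Z).trace ≤ μ * X.trace := by
  have hμ : ∑ b, ∑ b', (middleMarginal X ⊙ (μ • (1 : Matrix β β ℂ))) b b' = μ * X.trace := by
    rw [sum_hadamard_eq, transpose_smul, transpose_one, Matrix.mul_smul, mul_one, trace_smul,
      trace_middleMarginal, Complex.real_smul]
  have hgap := sum_sum_nonneg_of_posSemidef ((posSemidef_middleMarginal hX).hadamard hZ)
  rw [trace_linkProduct, ← hμ, ← sub_nonneg]
  simpa only [hadamard_apply, Matrix.sub_apply, mul_sub, Finset.sum_sub_distrib] using hgap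

end Trace

end LinkProduct

/-- Feasibility-transfer form of Proposition 1 (amortization does not enhance
the max-Rains information). -/
theorem amortization_max_rains_feasibility_transfer
    {A' A B' B : Type*}
    [Fintype A'] [Fintype A] [Fintype B'] [Fintype B] [DecidableEq A]
    [Nonempty A'] [Nonempty A] [Nonempty B'] [Nonempty B]
    (ρ : Matrix (A' × A × B') (A' × A × B') ℂ) (J : Matrix (A × B) (A × B) ℂ)
    (hρ : ρ.PosSemidef) (hJ : J.PosSemidef)
    (C D : Matrix (A' × A × B') (A' × A × B') ℂ)
    (hC : C.PosSemidef) (hD : D.PosSemidef)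
    (hCD : (ptLast (C - D) - ρ).PosSemidef)
    (V Y : Matrix (A × B) (A × B) ℂ)
    (hV : V.PosSemidef) (hY : Y.PosSemidef)
    (hVY : (ptSnd (V - Y) - J).PosSemidef)
    (μ : ℝ) (hμ : (μ • (1 : Matrix A A ℂ) - ptrSnd (V + Y)).PosSemidef)
    (ω : Matrix (A' × B × B') (A' × B × B') ℂ)
    (hω : ∀ x y, ω x y = ∑ a : A, ∑ a2 : A,
      ρ (x.1, a, x.2.2) (y.1, a2, y.2.2) * J (a, x.2.1) (a2, y.2.1)) :
    ∃ E F : Matrix (A' × B × B') (A' × B × B') ℂ,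
      E.PosSemidef ∧ F.PosSemidef ∧ (ptBoth (E - F) - ω).PosSemidef ∧
        ((E + F).trace).re ≤ μ * ((C + D).trace).re := by
  have hω_eq : ω = linkProduct ρ J := by
    ext x y
    rw [hω, linkProduct_apply]
  refine ⟨linkProduct C V + linkProduct D Y, linkProduct C Y + linkProduct D V,
    (posSemidef_linkProduct hC hV).add (posSemidef_linkProduct hD hY),
    (posSemidef_linkProduct hC hY).add (posSemidef_linkProduct hD hV), ?_, ?_⟩
  · have hdiff : linkProduct C V + linkProduct D Y - (linkProduct C Y + linkProduct D V) =
        linkProduct (C - D) (V - Y) := by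
      simp only [map_sub, LinearMap.sub_apply]
      abel
    rw [hdiff, ptBoth_linkProduct, hω_eq]
    exact posSemidef_linkProduct_sub_linkProduct hρ hCD hJ hVY
  · have hsum : linkProduct C V + linkProduct D Y + (linkProduct C Y + linkProduct D V) =
        linkProduct (C + D) (V + Y) := by
      simp only [map_add, LinearMap.add_apply]
      abel
    rw [hsum]
    simpa using (Complex.le_def.1 (trace_linkProduct_le (hC.add hD) hμ)).1
end
end

section
/- Let M, A, N be finite types, and let P : Matrix (M × A) (M × A) ℂ and Q : Matrix (A × N) (A × N) ℂ be positive semidefinite. Then the contraction R : Matrix (M × N) (M × N) ℂ defined by R (m,n) (m',n') = ∑_{a,a'} P (m,a) (m',a') * Q (a,n) (a',n') is positive semidefinite. -/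
open Matrix ComplexOrder Kronecker

noncomputable section

/-- Membership in the separable cone `SEP(α:β)`. -/
def InSepCone {α β : Type*} [Fintype α] [Fintype β] (X : Matrix (α × β) (α × β) ℂ) : Prop :=
  ∃ (n : ℕ) (P : Fin n → Matrix α α ℂ) (Q : Fin n → Matrix β β ℂ),
    (∀ i, (P i).PosSemidef) ∧ (∀ i, (Q i).PosSemidef) ∧
    ∀ x y : α × β, X x y = ∑ i, P i x.1 y.1 * Q i x.2 y.2

/-!
The submatrix of `P ⊗ Q` on the indices `((m, a), (a, n))` is the Hadamard product of pullbacks of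
`P` and `Q` to `M × A × N`, hence positive semidefinite by the Schur product theorem. Pairing the
`A`-factors with `Υ = ∑ a, |a⟩|a⟩` only sees this submatrix, and amounts to compressing it along
`|m, n⟩ ↦ ∑ a, |m, a, n⟩`.
-/

section SumSubmatrix

variable {ι m n R : Type*}

theorem isHermitian_sum_sum_submatrix [AddCommMonoid R] [StarAddMonoid R] {K : Matrix n n R}
    (hK : K.IsHermitian) (s : Finset ι) (e : ι → m → n) :
    (∑ a ∈ s, ∑ b ∈ s, K.submatrix (e a) (e b)).IsHermitian := by
  simp only [IsHermitian, conjTranspose_sum, conjTranspose_submatrix, hK.eq]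
  exact Finset.sum_comm

theorem posSemidef_sum_sum_submatrix [Ring R] [PartialOrder R] [StarRing R] {K : Matrix n n R}
    (hK : K.PosSemidef) (s : Finset ι) (e : ι → m → n) :
    (∑ a ∈ s, ∑ b ∈ s, K.submatrix (e a) (e b)).PosSemidef := by
  refine ⟨isHermitian_sum_sum_submatrix hK.isHermitian s e, fun x ↦ ?_⟩
  have quadraticForm_eq :
      (x.sum fun i xi ↦ x.sum fun j xj ↦
        star xi * (∑ a ∈ s, ∑ b ∈ s, K.submatrix (e a) (e b)) i j * xj) =
      (∑ a ∈ s, x.mapDomain (e a)).sum fun i xi ↦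
        (∑ a ∈ s, x.mapDomain (e a)).sum fun j xj ↦ star xi * K i j * xj := by
    rw [Finset.sum_comm]
    simp [Matrix.sum_apply, Finset.mul_sum, Finset.sum_mul, add_mul, mul_add,
      ← Finsupp.sum_finsetSum_index, Finsupp.sum_mapDomain_index, Finsupp.sum_finsetSum_comm]
  rw [quadraticForm_eq]
  exact hK.2 _

end SumSubmatrix

theorem contraction_posSemidef_general {𝕜 M A N : Type*} [RCLike 𝕜] [Fintype A]
    {P : Matrix (M × A) (M × A) 𝕜} {Q : Matrix (A × N) (A × N) 𝕜}
    (hP : P.PosSemidef) (hQ : Q.PosSemidef) :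
    (Matrix.of fun x y : M × N => ∑ a : A, ∑ a2 : A,
        P (x.1, a) (y.1, a2) * Q (a, x.2) (a2, y.2)).PosSemidef := by
  let toMA : M × A × N → M × A := fun z ↦ (z.1, z.2.1)
  let toAN : M × A × N → A × N := Prod.snd
  have hadamard_posSemidef : (P.submatrix toMA toMA ⊙ Q.submatrix toAN toAN).PosSemidef :=
    (hP.submatrix toMA).hadamard (hQ.submatrix toAN)
  convert posSemidef_sum_sum_submatrix hadamard_posSemidef Finset.univ
    fun a (x : M × N) ↦ (x.1, a, x.2)
  ext x y
  simp [Matrix.sum_apply, toMA, toAN]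

/-- The contraction of two positive semidefinite matrices over a shared tensor
factor is positive semidefinite. -/
theorem contraction_posSemidef
    {M A N : Type*} [Fintype M] [Fintype A] [Fintype N]
    (P : Matrix (M × A) (M × A) ℂ) (Q : Matrix (A × N) (A × N) ℂ)
    (hP : P.PosSemidef) (hQ : Q.PosSemidef) :
    (Matrix.of fun x y : M × N => ∑ a : A, ∑ a2 : A,
        P (x.1, a) (y.1, a2) * Q (a, x.2) (a2, y.2)).PosSemidef :=
  contraction_posSemidef_general hP hQ
end
end

section
/- Let M, A, N be finite types, and let P : Matrix (M × A) (M × A) ℂ and Q : Matrix (A × N) (A × N) ℂ be arbitrary matrices. Let R : Matrix (M × N) (M × N) ℂ be their contraction over A, R (m,n) (m',n') = ∑_{a,a'} P (m,a) (m',a') * Q (a,n) (a',n'). Then trace R = trace (P * ((1 : Matrix M M ℂ) ⊗ₖ (Tr_N Q)ᵀ)), where Tr_N Q is the partial trace of Q over N, ⊗ₖ is the Kronecker product, and ᵀ is the transpose. -/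
open Matrix ComplexOrder Kronecker

noncomputable section

section PartialTrace

variable {R ι ι' κ κ' ν ν' : Type*}

/-- The partial trace over the second tensor factor `κ`: `ptrSnd` with entries in any
additive commutative monoid and with row and column index types of the first factor allowed to
differ. -/
def partialTraceSnd [AddCommMonoid R] [Fintype κ] (X : Matrix (ι × κ) (ι' × κ) R) :
    Matrix ι ι' R :=
  of fun i i' => ∑ k, X (i, k) (i', k)

/-- The contraction of `P` and `Q` over their common tensor factor, pairing row indices with row
indices and column indices with column indices. All row and column index types may differ. -/
def contraction [NonUnitalNonAssocSemiring R] [Fintype κ] [Fintype κ']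
    (P : Matrix (ι × κ) (ι' × κ') R) (Q : Matrix (κ × ν) (κ' × ν') R) :
    Matrix (ι × ν) (ι' × ν') R :=
  of fun x y => ∑ k, ∑ k', P (x.1, k) (y.1, k') * Q (k, x.2) (k', y.2)

theorem trace_partialTraceSnd [AddCommMonoid R] [Fintype ι] [Fintype κ]
    (X : Matrix (ι × κ) (ι × κ) R) : (partialTraceSnd X).trace = X.trace :=
  (Fintype.sum_prod_type fun x => X x x).symm

theorem partialTraceSnd_contraction_apply [NonUnitalNonAssocSemiring R]
    [Fintype κ] [Fintype κ'] [Fintype ν]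
    (P : Matrix (ι × κ) (ι' × κ') R) (Q : Matrix (κ × ν) (κ' × ν) R) (i : ι) (i' : ι') :
    partialTraceSnd (contraction P Q) i i' =
      ∑ k, ∑ k', P (i, k) (i', k') * partialTraceSnd Q k k' :=
  calc ∑ n, ∑ k, ∑ k', P (i, k) (i', k') * Q (k, n) (k', n)
      = ∑ k, ∑ k', ∑ n, P (i, k) (i', k') * Q (k, n) (k', n) := by
        rw [Finset.sum_comm]
        exact Finset.sum_congr rfl fun k _ => Finset.sum_comm
    _ = ∑ k, ∑ k', P (i, k) (i', k') * ∑ n, Q (k, n) (k', n) := by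
        simp only [Finset.mul_sum]

variable [NonAssocSemiring R] [Fintype ι'] [DecidableEq ι'] [Fintype κ']

theorem mul_one_kronecker_apply (P : Matrix ι (ι' × κ') R) (T : Matrix κ' κ R)
    (i : ι) (i' : ι') (k : κ) :
    (P * ((1 : Matrix ι' ι' R) ⊗ₖ T)) i (i', k) = ∑ k', P i (i', k') * T k' k := by
  rw [mul_apply, Fintype.sum_prod_type, Fintype.sum_eq_single i']
  · simp only [kronecker_apply, one_apply_eq, one_mul]
  · intro j hj
    simp only [kronecker_apply, one_apply_ne hj, zero_mul, mul_zero, Finset.sum_const_zero]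

-- Matrix multiplication pairs a column of `P` with a row of the other factor, whereas `contraction`
-- pairs columns with columns: this is where the transpose comes from.
theorem partialTraceSnd_contraction [Fintype κ] [Fintype ν]
    (P : Matrix (ι × κ) (ι' × κ') R) (Q : Matrix (κ × ν) (κ' × ν) R) :
    partialTraceSnd (contraction P Q) =
      partialTraceSnd (P * ((1 : Matrix ι' ι' R) ⊗ₖ (partialTraceSnd Q)ᵀ)) := by
  ext i i'
  rw [partialTraceSnd_contraction_apply]
  exact Finset.sum_congr rfl fun k _ =>
    (mul_one_kronecker_apply P (partialTraceSnd Q)ᵀ (i, k) i' k).symm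

end PartialTrace

theorem contraction_trace_eq_general {R M A A' N : Type*} [NonAssocSemiring R]
    [Fintype M] [Fintype A] [Fintype A'] [Fintype N] [DecidableEq M]
    (P : Matrix (M × A) (M × A') R) (Q : Matrix (A × N) (A' × N) R) :
    (contraction P Q).trace = (P * ((1 : Matrix M M R) ⊗ₖ (partialTraceSnd Q)ᵀ)).trace := by
  rw [← trace_partialTraceSnd, partialTraceSnd_contraction, trace_partialTraceSnd]

/-- Trace of the contraction:
`Tr R = Tr (P * (1 ⊗ₖ (Tr_N Q)ᵀ))`. -/
theorem contraction_trace_eq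
    {M A N : Type*} [Fintype M] [Fintype A] [Fintype N] [DecidableEq M]
    (P : Matrix (M × A) (M × A) ℂ) (Q : Matrix (A × N) (A × N) ℂ) :
    (Matrix.of fun x y : M × N => ∑ a : A, ∑ a2 : A,
        P (x.1, a) (y.1, a2) * Q (a, x.2) (a2, y.2)).trace
      = (P * ((1 : Matrix M M ℂ) ⊗ₖ (ptrSnd Q)ᵀ)).trace :=
  contraction_trace_eq_general P Q
end
end

section
/- Let A and B be finite nonempty types and let ρ : Matrix (A × B) (A × B) ℂ be positive semidefinite with trace ρ = 1. Then sInf {c : ℝ | ∃ σ : Matrix (A × B) (A × B) ℂ, σ ∈ SEP(A:B) ∧ trace σ = 1 ∧ ρ ≤ c • σ} = sInf {t : ℝ | ∃ X : Matrix (A × B) (A × B) ℂ, X ∈ SEP(A:B) ∧ ρ ≤ X ∧ t = Re(trace X)}. (This is Lemma 2: the max-relative entropy of entanglement satisfies E_max(A;B)_ρ = log₂ W_sep(A;B)_ρ, where W_sep(A;B)_ρ = min{Tr X : ρ ≤ X, X in the separable cone}.) -/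
/-!
A feasible pair `(c, σ)` for `E_max` gives the feasible `X = c • σ` for `W_sep`, whose trace is `c`;
here `0 ≤ c` because `ρ ≤ c • σ` forces `Tr ρ ≤ c`. Conversely, every `X` in the separable cone is
`Tr X` times a separable state: if `Tr X ≠ 0` normalize `X`, and if `Tr X = 0` then `X = 0`, so that
any separable state will do.
-/

open Matrix ComplexOrder Kronecker

noncomputable section

section Trace

variable {n R : Type*} [Fintype n] [Ring R] [PartialOrder R] [StarRing R]

theorem exists_posSemidef_trace_eq_one [StarOrderedRing R] [Nonempty n] :
    ∃ P : Matrix n n R, P.PosSemidef ∧ P.trace = 1 := by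
  classical
  obtain ⟨i⟩ := ‹Nonempty n›
  refine ⟨diagonal (Pi.single i 1), .diagonal (Pi.single_nonneg.mpr zero_le_one), ?_⟩
  rw [trace_diagonal, Fintype.sum_pi_single']

theorem trace_le_trace_of_posSemidef_sub [AddLeftMono R] {M N : Matrix n n R}
    (h : (N - M).PosSemidef) : M.trace ≤ N.trace :=
  sub_nonneg.mp (trace_sub N M ▸ h.trace_nonneg)

end Trace

section SeparableCone

variable {α β : Type*} [Fintype α] [Fintype β]

theorem inSepCone_kronecker {P : Matrix α α ℂ} {Q : Matrix β β ℂ}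
    (hP : P.PosSemidef) (hQ : Q.PosSemidef) : InSepCone (P ⊗ₖ Q) :=
  ⟨1, fun _ => P, fun _ => Q, fun _ => hP, fun _ => hQ, fun x y => by
    rw [Fin.sum_univ_one, kroneckerMap_apply]⟩

theorem exists_inSepCone_trace_eq_one [Nonempty α] [Nonempty β] :
    ∃ σ : Matrix (α × β) (α × β) ℂ, InSepCone σ ∧ σ.trace = 1 := by
  obtain ⟨P, hP, trace_P⟩ := exists_posSemidef_trace_eq_one (n := α) (R := ℂ)
  obtain ⟨Q, hQ, trace_Q⟩ := exists_posSemidef_trace_eq_one (n := β) (R := ℂ)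
  exact ⟨P ⊗ₖ Q, inSepCone_kronecker hP hQ, by rw [trace_kronecker, trace_P, trace_Q, one_mul]⟩

namespace InSepCone

variable {X : Matrix (α × β) (α × β) ℂ}

theorem smul (hX : InSepCone X) {r : ℝ} (hr : 0 ≤ r) : InSepCone (r • X) := by
  obtain ⟨n, P, Q, hP, hQ, hPQ⟩ := hX
  refine ⟨n, fun i => r • P i, Q, fun i => (hP i).smul hr, hQ, fun x y => ?_⟩
  simp only [Matrix.smul_apply, hPQ, Finset.smul_sum, smul_mul_assoc]

theorem posSemidef (hX : InSepCone X) : X.PosSemidef := by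
  obtain ⟨n, P, Q, hP, hQ, hPQ⟩ := hX
  have X_eq_sum : X = ∑ i, P i ⊗ₖ Q i := by
    ext x y
    simp only [hPQ, Matrix.sum_apply, kroneckerMap_apply]
  rw [X_eq_sum]
  exact posSemidef_sum _ fun i _ => (hP i).kronecker (hQ i)

theorem exists_eq_trace_smul [Nonempty α] [Nonempty β] (hX : InSepCone X) :
    ∃ σ : Matrix (α × β) (α × β) ℂ, InSepCone σ ∧ σ.trace = 1 ∧ X = X.trace.re • σ := by
  obtain ⟨r, hr, hXr⟩ : ∃ r : ℝ, 0 ≤ r ∧ (r : ℂ) = X.trace :=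
    RCLike.nonneg_iff_exists_ofReal.mp hX.posSemidef.trace_nonneg
  rw [← hXr, Complex.ofReal_re]
  rcases hr.eq_or_lt with rfl | r_pos
  · obtain ⟨σ, hσ, trace_σ⟩ := exists_inSepCone_trace_eq_one (α := α) (β := β)
    have X_eq_zero : X = 0 :=
      hX.posSemidef.trace_eq_zero_iff.mp (by rw [← hXr, Complex.ofReal_zero])
    exact ⟨σ, hσ, trace_σ, by rw [X_eq_zero, zero_smul]⟩
  · refine ⟨r⁻¹ • X, hX.smul (inv_nonneg.mpr hr), ?_, (smul_inv_smul₀ r_pos.ne' X).symm⟩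
    rw [trace_smul, ← hXr, Complex.real_smul, ← Complex.ofReal_mul, inv_mul_cancel₀ r_pos.ne',
      Complex.ofReal_one]

end InSepCone

end SeparableCone

theorem emax_eq_wsep_general {A B : Type*} [Fintype A] [Fintype B] [Nonempty A] [Nonempty B]
    (ρ : Matrix (A × B) (A × B) ℂ) (hρ : 0 ≤ ρ.trace.re) :
    {c : ℝ | ∃ σ : Matrix (A × B) (A × B) ℂ,
        InSepCone σ ∧ σ.trace = 1 ∧ (c • σ - ρ).PosSemidef}
      = {t : ℝ | ∃ X : Matrix (A × B) (A × B) ℂ,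
        InSepCone X ∧ (X - ρ).PosSemidef ∧ t = (X.trace).re} := by
  ext c
  constructor
  · rintro ⟨σ, hσ, trace_σ, ρ_le⟩
    have trace_cσ : (c • σ).trace.re = c := by
      rw [trace_smul, trace_σ, Complex.smul_re, Complex.one_re, smul_eq_mul, mul_one]
    have c_nonneg : 0 ≤ c := calc
      0 ≤ ρ.trace.re := hρ
      _ ≤ (c • σ).trace.re := Complex.re_le_re (trace_le_trace_of_posSemidef_sub ρ_le)
      _ = c := trace_cσ
    exact ⟨c • σ, hσ.smul c_nonneg, ρ_le, trace_cσ.symm⟩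
  · rintro ⟨X, hX, ρ_le, rfl⟩
    obtain ⟨σ, hσ, trace_σ, X_eq⟩ := hX.exists_eq_trace_smul
    exact ⟨σ, hσ, trace_σ, X_eq ▸ ρ_le⟩

/-- Lemma 2: `E_max(A;B)_ρ = log₂ W_sep(A;B)_ρ`, stated as equality of the two
optimization values. -/
theorem emax_eq_wsep
    {A B : Type*} [Fintype A] [Fintype B] [Nonempty A] [Nonempty B]
    (ρ : Matrix (A × B) (A × B) ℂ) (hρ : ρ.PosSemidef) (hTr : ρ.trace = 1) :
    sInf {c : ℝ | ∃ σ : Matrix (A × B) (A × B) ℂ,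
        InSepCone σ ∧ σ.trace = 1 ∧ (c • σ - ρ).PosSemidef}
      = sInf {t : ℝ | ∃ X : Matrix (A × B) (A × B) ℂ,
        InSepCone X ∧ (X - ρ).PosSemidef ∧ t = (X.trace).re} :=
  congrArg sInf (emax_eq_wsep_general ρ (by rw [hTr, Complex.one_re]; exact zero_le_one))
end
end

section
/- Let A', A, B', B be finite nonempty types. Let ρ : Matrix (A' × A × B') (A' × A × B') ℂ and J : Matrix (A × B) (A × B) ℂ be positive semidefinite. Suppose C : Matrix (A' × A × B') (A' × A × B') ℂ admits a separable decomposition across (A'×A):B', i.e. there exist n : ℕ and positive semidefinite P : Fin n → Matrix (A' × A) (A' × A) ℂ and Q : Fin n → Matrix B' B' ℂ with C (a',a,b') (â',â,b̂') = ∑ i, P i (a',a) (â',â) * Q i b' b̂', and that ρ ≤ C. Suppose Y ∈ SEP(A:B) with J ≤ Y, and μ : ℝ satisfies Tr_B Y ≤ μ • (1 : Matrix A A ℂ). Define E : Matrix (A' × B × B') (A' × B × B') ℂ by E (a',b,b') (â',b̂,b̂') = ∑_{a,â} C (a',a,b') (â',â,b̂') * Y (a,b) (â,b̂), and ω : Matrix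 (A' × B × B') (A' × B × B') ℂ by ω (a',b,b') (â',b̂,b̂') = ∑_{a,â} ρ (a',a,b') (â',â,b̂') * J (a,b) (â,b̂). Then: (i) ω ≤ E; (ii) E admits a separable decomposition across A':(B×B'), i.e. there exist m : ℕ and positive semidefinite R : Fin m → Matrix A' A' ℂ and W : Fin m → Matrix (B × B') (B × B') ℂ with E (a',b,b') (â',b̂,b̂') = ∑ i, R i a' â' * W i (b,b') (b̂,b̂'); and (iii) Re(trace E) ≤ μ * Re(trace C). (This is the feasibility-transfer form of Proposition 3: amortization does not increase a channel's max-relative entropy of entanglement.) -/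
open Matrix ComplexOrder Kronecker

noncomputable section

/-!
Write `C ⋆ Y` for the contraction of the middle system of `C` against a Choi operator `Y`, so that
`E = C ⋆ Y` and `ω = ρ ⋆ J`. The operation `⋆` is bilinear and preserves positivity, because it sums
the blocks of a Hadamard product, and Schur's product theorem applies. Hence
`C ⋆ Y - ρ ⋆ J = (C - ρ) ⋆ Y + ρ ⋆ (Y - J)` is positive semidefinite. On product terms
`(P ⊗ Q) ⋆ (S ⊗ T) = P[S] ⊗ (T ⊗ Q)`, where `P[S]` contracts the second factor of `P` against `S`,
so separability is carried over term by term. Finally, the trace of `C ⋆ Y` only sees `Tr_B Y`,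
it is monotone in `Tr_B Y`, and it equals `μ * Tr C` when `Tr_B Y` is replaced by `μ • 1`.
-/

section Contraction

variable {α β γ δ R : Type*} [Fintype β] [CommSemiring R]

/-- The contraction `X[M] = Tr_β (X (1 ⊗ Mᵀ))` of the second factor of `X` against `M`. -/
def sndContraction :
    Matrix (α × β) (α × β) R →ₗ[R] Matrix β β R →ₗ[R] Matrix α α R :=
  LinearMap.mk₂ R
    (fun X M => Matrix.of fun s t => ∑ b, ∑ b', X (s, b) (t, b') * M b b')
    (fun _ _ _ => by ext; simp [add_mul, Finset.sum_add_distrib])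
    (fun _ _ _ => by ext; simp [mul_assoc, Finset.mul_sum])
    (fun _ _ _ => by ext; simp [mul_add, Finset.sum_add_distrib])
    (fun _ _ _ => by ext; simp [mul_left_comm, Finset.mul_sum])

/-- The contraction of the middle factor of `X` against the first factor of `M`. If `M` is the Choi
operator of a map `N` from `β` to `δ`, this is the result of applying `N` to the middle system
of `X`. -/
def choiAction :
    Matrix (α × β × γ) (α × β × γ) R →ₗ[R] Matrix (β × δ) (β × δ) R →ₗ[R]
      Matrix (α × δ × γ) (α × δ × γ) R :=
  LinearMap.mk₂ R
    (fun X M => Matrix.of fun x y =>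
      ∑ b, ∑ b', X (x.1, b, x.2.2) (y.1, b', y.2.2) * M (b, x.2.1) (b', y.2.1))
    (fun _ _ _ => by ext; simp [add_mul, Finset.sum_add_distrib])
    (fun _ _ _ => by ext; simp [mul_assoc, Finset.mul_sum])
    (fun _ _ _ => by ext; simp [mul_add, Finset.sum_add_distrib])
    (fun _ _ _ => by ext; simp [mul_left_comm, Finset.mul_sum])

theorem sndContraction_apply (X : Matrix (α × β) (α × β) R) (M : Matrix β β R) (s t : α) :
    sndContraction X M s t = ∑ b, ∑ b', X (s, b) (t, b') * M b b' :=
  rfl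

theorem choiAction_apply (X : Matrix (α × β × γ) (α × β × γ) R)
    (M : Matrix (β × δ) (β × δ) R) (x y : α × δ × γ) :
    choiAction X M x y =
      ∑ b, ∑ b', X (x.1, b, x.2.2) (y.1, b', y.2.2) * M (b, x.2.1) (b', y.2.1) :=
  rfl

theorem choiAction_kronecker (P : Matrix (α × β) (α × β) R) (Q : Matrix γ γ R)
    (S : Matrix β β R) (T : Matrix δ δ R) :
    choiAction ((P ⊗ₖ Q).submatrix (Equiv.prodAssoc α β γ).symm (Equiv.prodAssoc α β γ).symm)
      (S ⊗ₖ T) = sndContraction P S ⊗ₖ (T ⊗ₖ Q) := by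
  ext x y
  simp only [choiAction_apply, sndContraction_apply, Matrix.submatrix_apply,
    Equiv.prodAssoc_symm_apply, Matrix.kroneckerMap_apply, Finset.sum_mul]
  refine Finset.sum_congr rfl fun b _ => Finset.sum_congr rfl fun b' _ => ?_
  ring

theorem trace_sndContraction_one [Fintype α] [DecidableEq β] (X : Matrix (α × β) (α × β) R) :
    (sndContraction X 1).trace = X.trace := by
  simp [Matrix.trace, sndContraction_apply, Matrix.one_apply, Fintype.sum_prod_type]

end Contraction

section PosSemidef

theorem posSemidef_sum_blocks {α β R : Type*} [Fintype β] [Ring R] [PartialOrder R] [StarRing R]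
    {Z : Matrix (α × β) (α × β) R} (hZ : Z.PosSemidef) :
    (Matrix.of fun s t => ∑ b, ∑ b', Z (s, b) (t, b')).PosSemidef := by
  refine ⟨Matrix.IsHermitian.ext fun s t => ?_, fun x => ?_⟩
  · simp only [Matrix.of_apply, star_sum, hZ.isHermitian.apply]
    exact Finset.sum_comm
  -- The quadratic form at `x` is that of `Z` at the vector `(s, b) ↦ x s`.
  · classical
    let y : α × β →₀ R :=
      Finsupp.onFinset (x.support ×ˢ Finset.univ) (fun p => x p.1) (by simp)
    have hy (f : α × β → R → R) (hf : ∀ p, f p 0 = 0) :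
        y.sum f = x.sum fun s r => ∑ b, f (s, b) r := by
      rw [Finsupp.onFinset_sum _ hf, Finset.sum_product]
      rfl
    calc
      0 ≤ y.sum fun p yp => y.sum fun q yq => star yp * Z p q * yq := hZ.2 y
      _ = x.sum fun s xs => ∑ b, x.sum fun t xt => ∑ b', star xs * Z (s, b) (t, b') * xt :=
        (hy _ (by simp)).trans <| Finset.sum_congr rfl fun s _ =>
          Finset.sum_congr rfl fun b _ => hy _ (by simp)
      _ = x.sum fun s xs => x.sum fun t xt =>
          star xs * (∑ b, ∑ b', Z (s, b) (t, b')) * xt := by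
        simp only [Finsupp.sum, Finset.mul_sum, Finset.sum_mul]
        exact Finset.sum_congr rfl fun s _ => Finset.sum_comm

variable {α β γ δ 𝕜 : Type*} [Fintype β] [RCLike 𝕜]

theorem posSemidef_sndContraction {X : Matrix (α × β) (α × β) 𝕜} {M : Matrix β β 𝕜}
    (hX : X.PosSemidef) (hM : M.PosSemidef) : (sndContraction X M).PosSemidef :=
  (posSemidef_sum_blocks (hX.hadamard (hM.submatrix Prod.snd)) :)

theorem posSemidef_choiAction {X : Matrix (α × β × γ) (α × β × γ) 𝕜}
    {M : Matrix (β × δ) (β × δ) 𝕜} (hX : X.PosSemidef) (hM : M.PosSemidef) :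
    (choiAction X M).PosSemidef :=
  (posSemidef_sum_blocks <|
    (hX.submatrix fun p : (α × δ × γ) × β => (p.1.1, p.2, p.1.2.2)).hadamard
      (hM.submatrix fun p => (p.2, p.1.2.1)) :)

theorem posSemidef_choiAction_sub_choiAction {X X' : Matrix (α × β × γ) (α × β × γ) 𝕜}
    {M M' : Matrix (β × δ) (β × δ) 𝕜} (hX : X.PosSemidef) (hXX' : (X' - X).PosSemidef)
    (hM' : M'.PosSemidef) (hMM' : (M' - M).PosSemidef) :
    (choiAction X' M' - choiAction X M).PosSemidef := by
  have h : choiAction X' M' - choiAction X M =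
      choiAction (X' - X) M' + choiAction X (M' - M) := by
    simp only [map_sub, LinearMap.sub_apply, sub_add_sub_cancel]
  exact h ▸ (posSemidef_choiAction hXX' hM').add (posSemidef_choiAction hX hMM')

end PosSemidef

section Trace

/-- The rearrangement `((a, b), c) ↦ (a, c, b)` of three systems, used to view the middle system of
a triple as the second factor of a pair. -/
def prodRightComm (α β γ : Type*) : (α × β) × γ ≃ α × γ × β :=
  (Equiv.prodAssoc α β γ).trans ((Equiv.refl α).prodCongr (Equiv.prodComm β γ))

variable {α β γ δ : Type*} [Fintype α] [Fintype β] [Fintype γ] [Fintype δ]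

theorem trace_choiAction (X : Matrix (α × β × γ) (α × β × γ) ℂ) (M : Matrix (β × δ) (β × δ) ℂ) :
    (choiAction X M).trace =
      (sndContraction (X.submatrix (prodRightComm α γ β) (prodRightComm α γ β))
        (ptrSnd M)).trace := by
  simp only [Matrix.trace, Matrix.diag_apply, choiAction_apply, sndContraction_apply, ptrSnd,
    Matrix.of_apply, Matrix.submatrix_apply, Fintype.sum_prod_type, Finset.mul_sum]
  refine Finset.sum_congr rfl fun a _ => Finset.sum_comm.trans <| Finset.sum_congr rfl fun c _ => ?_
  exact Finset.sum_comm.trans <| Finset.sum_congr rfl fun b _ => Finset.sum_comm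

theorem trace_choiAction_le [DecidableEq β] {X : Matrix (α × β × γ) (α × β × γ) ℂ}
    (hX : X.PosSemidef) {M : Matrix (β × δ) (β × δ) ℂ} {μ : ℝ}
    (hM : (μ • (1 : Matrix β β ℂ) - ptrSnd M).PosSemidef) :
    (choiAction X M).trace ≤ μ * X.trace := by
  let e := prodRightComm α γ β
  have h := (posSemidef_sndContraction (hX.submatrix e) hM).trace_nonneg
  have h_trace : (X.submatrix e e).trace = X.trace := e.sum_comp fun p => X p p
  rw [← Complex.coe_smul, map_sub, map_smul, Matrix.trace_sub, Matrix.trace_smul,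
    trace_sndContraction_one, h_trace, ← trace_choiAction, sub_nonneg] at h
  exact h

end Trace

section Separable

variable {α β γ δ : Type*} [Fintype α] [Fintype β] [Fintype γ] [Fintype δ]

theorem inSepCone_sum_kronecker {ι : Type*} [Fintype ι] {P : ι → Matrix α α ℂ}
    {Q : ι → Matrix β β ℂ} (hP : ∀ i, (P i).PosSemidef) (hQ : ∀ i, (Q i).PosSemidef) :
    InSepCone (∑ i, P i ⊗ₖ Q i) := by
  let e := (Fintype.equivFin ι).symm
  refine ⟨_, P ∘ e, Q ∘ e, fun i => hP (e i), fun i => hQ (e i), fun x y => ?_⟩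
  rw [← e.sum_comp, Matrix.sum_apply]
  rfl

theorem InSepCone.exists_eq_sum_kronecker {X : Matrix (α × β) (α × β) ℂ} (hX : InSepCone X) :
    ∃ (n : ℕ) (P : Fin n → Matrix α α ℂ) (Q : Fin n → Matrix β β ℂ),
      (∀ i, (P i).PosSemidef) ∧ (∀ i, (Q i).PosSemidef) ∧ X = ∑ i, P i ⊗ₖ Q i := by
  obtain ⟨n, P, Q, hP, hQ, h⟩ := hX
  exact ⟨n, P, Q, hP, hQ, by ext x y; rw [h, Matrix.sum_apply]; rfl⟩

theorem InSepCone.posSemidef_s10 {X : Matrix (α × β) (α × β) ℂ} (hX : InSepCone X) :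
    X.PosSemidef := by
  obtain ⟨n, P, Q, hP, hQ, rfl⟩ := hX.exists_eq_sum_kronecker
  exact Matrix.posSemidef_sum _ fun i _ => (hP i).kronecker (hQ i)

theorem inSepCone_choiAction {X : Matrix (α × β × γ) (α × β × γ) ℂ}
    (hX : InSepCone (X.submatrix (Equiv.prodAssoc α β γ) (Equiv.prodAssoc α β γ)))
    {M : Matrix (β × δ) (β × δ) ℂ} (hM : InSepCone M) : InSepCone (choiAction X M) := by
  obtain ⟨n, P, Q, hP, hQ, hPQ⟩ := hX.exists_eq_sum_kronecker
  obtain ⟨k, S, T, hS, hT, rfl⟩ := hM.exists_eq_sum_kronecker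
  let e := (Equiv.prodAssoc α β γ).symm
  obtain rfl : X = ∑ i, (P i ⊗ₖ Q i).submatrix e e := by
    ext x y
    simpa only [Matrix.sum_apply, Matrix.submatrix_apply, e, Equiv.apply_symm_apply] using
      congr_fun₂ hPQ (e x) (e y)
  have h_expand : choiAction (∑ i, (P i ⊗ₖ Q i).submatrix e e) (∑ j, S j ⊗ₖ T j) =
      ∑ p : Fin k × Fin n, sndContraction (P p.2) (S p.1) ⊗ₖ (T p.1 ⊗ₖ Q p.2) := by
    simp only [map_sum, LinearMap.sum_apply, choiAction_kronecker, e, Fintype.sum_prod_type]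
  rw [h_expand]
  exact inSepCone_sum_kronecker (fun p => posSemidef_sndContraction (hP p.2) (hS p.1))
    fun p => (hT p.1).kronecker (hQ p.2)

end Separable

theorem amortization_emax_feasibility_transfer_general {A' A B' B : Type*}
    [Fintype A'] [Fintype A] [Fintype B'] [Fintype B] [DecidableEq A]
    {ρ C : Matrix (A' × A × B') (A' × A × B') ℂ} {J Y : Matrix (A × B) (A × B) ℂ}
    (hρ : ρ.PosSemidef)
    (hCsep : InSepCone (C.submatrix (Equiv.prodAssoc A' A B') (Equiv.prodAssoc A' A B')))
    (hρC : (C - ρ).PosSemidef) (hYsep : InSepCone Y) (hJY : (Y - J).PosSemidef)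
    {μ : ℝ} (hμ : (μ • (1 : Matrix A A ℂ) - ptrSnd Y).PosSemidef) :
    (choiAction C Y - choiAction ρ J).PosSemidef ∧ InSepCone (choiAction C Y) ∧
      (choiAction C Y).trace.re ≤ μ * C.trace.re := by
  have hC : C.PosSemidef := by simpa using hρC.add hρ
  refine ⟨posSemidef_choiAction_sub_choiAction hρ hρC hYsep.posSemidef_s10 hJY,
    inSepCone_choiAction hCsep hYsep, ?_⟩
  simpa using (Complex.le_def.1 (trace_choiAction_le hC hμ)).1

/-- Feasibility-transfer form of Proposition 3: amortization does not increase
a channel's max-relative entropy of entanglement. -/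
theorem amortization_emax_feasibility_transfer
    {A' A B' B : Type*}
    [Fintype A'] [Fintype A] [Fintype B'] [Fintype B] [DecidableEq A]
    [Nonempty A'] [Nonempty A] [Nonempty B'] [Nonempty B]
    (ρ : Matrix (A' × A × B') (A' × A × B') ℂ) (J : Matrix (A × B) (A × B) ℂ)
    (hρ : ρ.PosSemidef) (hJ : J.PosSemidef)
    (C : Matrix (A' × A × B') (A' × A × B') ℂ)
    (hCsep : ∃ (n : ℕ) (P : Fin n → Matrix (A' × A) (A' × A) ℂ)
        (Q : Fin n → Matrix B' B' ℂ),
      (∀ i, (P i).PosSemidef) ∧ (∀ i, (Q i).PosSemidef) ∧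
      ∀ x y : A' × A × B',
        C x y = ∑ i, P i (x.1, x.2.1) (y.1, y.2.1) * Q i x.2.2 y.2.2)
    (hρC : (C - ρ).PosSemidef)
    (Y : Matrix (A × B) (A × B) ℂ) (hYsep : InSepCone Y)
    (hJY : (Y - J).PosSemidef)
    (μ : ℝ) (hμ : (μ • (1 : Matrix A A ℂ) - ptrSnd Y).PosSemidef)
    (E ω : Matrix (A' × B × B') (A' × B × B') ℂ)
    (hE : ∀ x y, E x y = ∑ a : A, ∑ a2 : A,
      C (x.1, a, x.2.2) (y.1, a2, y.2.2) * Y (a, x.2.1) (a2, y.2.1))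
    (hω : ∀ x y, ω x y = ∑ a : A, ∑ a2 : A,
      ρ (x.1, a, x.2.2) (y.1, a2, y.2.2) * J (a, x.2.1) (a2, y.2.1)) :
    (E - ω).PosSemidef ∧
    (∃ (m : ℕ) (R : Fin m → Matrix A' A' ℂ)
        (W : Fin m → Matrix (B × B') (B × B') ℂ),
      (∀ i, (R i).PosSemidef) ∧ (∀ i, (W i).PosSemidef) ∧
      ∀ x y : A' × B × B', E x y = ∑ i, R i x.1 y.1 * W i x.2 y.2) ∧
    (E.trace).re ≤ μ * (C.trace).re := by
  obtain rfl : E = choiAction C Y := Matrix.ext hE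
  obtain rfl : ω = choiAction ρ J := Matrix.ext hω
  obtain ⟨n, P, Q, hP, hQ, hPQ⟩ := hCsep
  exact amortization_emax_feasibility_transfer_general hρ
    ⟨n, P, Q, hP, hQ, fun _ _ => hPQ _ _⟩ hρC hYsep hJY hμ
end
end

section
/- Let A', A, B', B be finite types. Suppose C : Matrix (A' × A × B') (A' × A × B') ℂ admits a separable decomposition across (A'×A):B', i.e. there exist n : ℕ and positive semidefinite P : Fin n → Matrix (A' × A) (A' × A) ℂ, Q : Fin n → Matrix B' B' ℂ with C (a',a,b') (â',â,b̂') = ∑ i, P i (a',a) (â',â) * Q i b' b̂', and suppose Y ∈ SEP(A:B). Then the contraction E : Matrix (A' × B × B') (A' × B × B') ℂ defined by E (a',b,b') (â',b̂,b̂') = ∑_{a,â} C (a',a,b') (â',â,b̂') * Y (a,b) (â,b̂) admits a separable decomposition across A':(B×B'): there exist m : ℕ and positive semidefinite R : Fin m → Matrix A' A' ℂ, W : Fin m → Matrix (B × B') (B × B') ℂ with E (a',b,b') (â',b̂,b̂') = ∑ i, R i a' â' * W i (b,b') (b̂,b̂'). (This is the separability-preservation step in the proof of Proposition 3.) -/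
open Matrix ComplexOrder Kronecker

noncomputable section

/-!
The contraction is bilinear, so it is enough to contract a product `P ⊗ Q` with a product `S ⊗ T`,
where `P` is positive semidefinite on `A' × A` and `S` on `A`. The result is `P' ⊗ (T ⊗ Q)`, where
`P'` contracts `P` with `S` over `A`. Now `P'` is the Schur product of `P` with the lift of `S` to
`A' × A`, compressed by the all-ones vector on `A`, hence positive semidefinite.
-/

/-- The cone of separable matrices on `α × β`: finite sums of Kronecker products of positive
semidefinite matrices. The index types may be infinite, positive semidefiniteness then being
tested on finitely supported vectors; `mem_separableCone_iff` identifies this with the explicit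
decompositions of `InSepCone`. -/
def separableCone (𝕜 α β : Type*) [RCLike 𝕜] : AddSubmonoid (Matrix (α × β) (α × β) 𝕜) :=
  AddSubmonoid.closure {X | ∃ (P : Matrix α α 𝕜) (Q : Matrix β β 𝕜),
    P.PosSemidef ∧ Q.PosSemidef ∧ P ⊗ₖ Q = X}

section SeparableCone

variable {𝕜 α β : Type*} [RCLike 𝕜]

theorem kronecker_mem_separableCone {P : Matrix α α 𝕜} {Q : Matrix β β 𝕜}
    (hP : P.PosSemidef) (hQ : Q.PosSemidef) : P ⊗ₖ Q ∈ separableCone 𝕜 α β :=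
  AddSubmonoid.subset_closure ⟨P, Q, hP, hQ, rfl⟩

theorem mem_separableCone_iff {X : Matrix (α × β) (α × β) 𝕜} :
    X ∈ separableCone 𝕜 α β ↔
      ∃ (n : ℕ) (P : Fin n → Matrix α α 𝕜) (Q : Fin n → Matrix β β 𝕜),
        (∀ i, (P i).PosSemidef) ∧ (∀ i, (Q i).PosSemidef) ∧
        ∀ x y : α × β, X x y = ∑ i, P i x.1 y.1 * Q i x.2 y.2 := by
  constructor
  · intro hX
    induction hX using AddSubmonoid.closure_induction with
    | mem X hX =>
      obtain ⟨P, Q, hP, hQ, rfl⟩ := hX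
      exact ⟨1, fun _ => P, fun _ => Q, fun _ => hP, fun _ => hQ, by simp⟩
    | zero => exact ⟨0, Fin.elim0, Fin.elim0, nofun, nofun, by simp⟩
    | add X X' _ _ hX hX' =>
      obtain ⟨n, P, Q, hP, hQ, hX⟩ := hX
      obtain ⟨m, P', Q', hP', hQ', hX'⟩ := hX'
      refine ⟨n + m, Fin.append P P', Fin.append Q Q', ?_, ?_, fun x y => ?_⟩
      · exact Fin.addCases (by simpa using hP) (by simpa using hP')
      · exact Fin.addCases (by simpa using hQ) (by simpa using hQ')
      · simp [Fin.sum_univ_add, hX, hX']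
  · rintro ⟨n, P, Q, hP, hQ, hX⟩
    have hsum : X = ∑ i, P i ⊗ₖ Q i := by
      ext x y
      simp only [hX, Matrix.sum_apply, kroneckerMap_apply]
    exact hsum ▸ sum_mem fun i _ => kronecker_mem_separableCone (hP i) (hQ i)

end SeparableCone

section PosSemidef

variable {α β γ : Type*} [Fintype γ]

theorem posSemidef_sum_sum_block {R : Type*} [Ring R] [PartialOrder R] [StarRing R]
    {M : Matrix (α × γ) (α × γ) R} (hM : M.PosSemidef) :
    (Matrix.of fun x y : α => ∑ c, ∑ c', M (x, c) (y, c')).PosSemidef := by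
  classical
  refine ⟨?_, fun v => ?_⟩
  · ext x y
    simp only [conjTranspose_apply, of_apply, star_sum, hM.isHermitian.apply]
    exact Finset.sum_comm
  · -- The quadratic form of the block sums at `v` is that of `M` at `v ⊗ (1, …, 1)`.
    let w : α × γ →₀ R := Finsupp.onFinset (v.support ×ˢ Finset.univ) (fun p => v p.1) (by simp)
    have hw (g : α × γ → R → R) (hg : ∀ p, g p 0 = 0) :
        w.sum g = v.sum fun x r => ∑ c, g (x, c) r := by
      rw [Finsupp.onFinset_sum _ hg, Finset.sum_product, Finsupp.sum]
    convert hM.2 w using 1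
    simp only [hw, mul_zero, implies_true]
    rw [hw _ (by simp)]
    simp only [Finsupp.sum, of_apply, Finset.mul_sum, Finset.sum_mul]
    exact Finset.sum_congr rfl fun x _ => Finset.sum_comm

-- `Matrix.PosSemidef.kronecker` is restricted to finite index types.
theorem posSemidef_kronecker {𝕜 : Type*} [RCLike 𝕜] {P : Matrix α α 𝕜} {Q : Matrix β β 𝕜}
    (hP : P.PosSemidef) (hQ : Q.PosSemidef) : (P ⊗ₖ Q).PosSemidef :=
  (hP.submatrix Prod.fst).hadamard (hQ.submatrix Prod.snd)

end PosSemidef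

section Contraction

variable {R α β γ δ : Type*} [CommSemiring R] [Fintype γ]

/-- Contraction of the second tensor factor of a matrix on `α × γ` with a matrix on `γ`. No index
is transposed: this is the partial trace over `γ` of `P * (1 ⊗ Sᵀ)`. -/
def contractSnd (P : Matrix (α × γ) (α × γ) R) (S : Matrix γ γ R) : Matrix α α R :=
  Matrix.of fun x y => ∑ c, ∑ c', P (x, c) (y, c') * S c c'

/-- The contraction over `γ` of a matrix on `(α × γ) × δ` with a matrix on `γ × β`, as a bilinear
map. For Choi matrices this is the link product. -/
def contract : Matrix ((α × γ) × δ) ((α × γ) × δ) R →ₗ[R] Matrix (γ × β) (γ × β) R →ₗ[R]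
    Matrix (α × β × δ) (α × β × δ) R :=
  LinearMap.mk₂ R
    (fun C Y => Matrix.of fun x y => ∑ c, ∑ c',
      C ((x.1, c), x.2.2) ((y.1, c'), y.2.2) * Y (c, x.2.1) (c', y.2.1))
    (fun _ _ _ => by ext; simp [add_mul, Finset.sum_add_distrib])
    (fun _ _ _ => by ext; simp [Finset.mul_sum, mul_assoc])
    (fun _ _ _ => by ext; simp [mul_add, Finset.sum_add_distrib])
    (fun _ _ _ => by ext; simp [Finset.mul_sum, mul_left_comm])

theorem contract_kronecker_kronecker (P : Matrix (α × γ) (α × γ) R) (Q : Matrix δ δ R)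
    (S : Matrix γ γ R) (T : Matrix β β R) :
    contract (P ⊗ₖ Q) (S ⊗ₖ T) = contractSnd P S ⊗ₖ (T ⊗ₖ Q) := by
  ext x y
  simp only [contract, contractSnd, LinearMap.mk₂_apply, of_apply, kroneckerMap_apply,
    Finset.sum_mul]
  exact Finset.sum_congr rfl fun c _ => Finset.sum_congr rfl fun c' _ => by ring

end Contraction

section Separability

variable {𝕜 α β γ δ : Type*} [RCLike 𝕜] [Fintype γ]

theorem posSemidef_contractSnd {P : Matrix (α × γ) (α × γ) 𝕜} {S : Matrix γ γ 𝕜}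
    (hP : P.PosSemidef) (hS : S.PosSemidef) : (contractSnd P S).PosSemidef :=
  posSemidef_sum_sum_block (M := P ⊙ S.submatrix Prod.snd Prod.snd)
    (hP.hadamard (hS.submatrix Prod.snd))

theorem contract_mem_separableCone
    {C : Matrix ((α × γ) × δ) ((α × γ) × δ) 𝕜} {Y : Matrix (γ × β) (γ × β) 𝕜}
    (hC : C ∈ separableCone 𝕜 (α × γ) δ) (hY : Y ∈ separableCone 𝕜 γ β) :
    contract C Y ∈ separableCone 𝕜 α (β × δ) := by
  induction hC using AddSubmonoid.closure_induction with
  | zero => simp only [map_zero, LinearMap.zero_apply, zero_mem]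
  | add C C' _ _ hC hC' => simpa only [map_add, LinearMap.add_apply] using add_mem hC hC'
  | mem C hC =>
    obtain ⟨P, Q, hP, hQ, rfl⟩ := hC
    induction hY using AddSubmonoid.closure_induction with
    | zero => simp only [map_zero, zero_mem]
    | add Y Y' _ _ hY hY' => simpa only [map_add] using add_mem hY hY'
    | mem Y hY =>
      obtain ⟨S, T, hS, hT, rfl⟩ := hY
      rw [contract_kronecker_kronecker]
      exact kronecker_mem_separableCone (posSemidef_contractSnd hP hS) (posSemidef_kronecker hT hQ)

theorem contraction_preserves_separability_general
    {C : Matrix (α × γ × δ) (α × γ × δ) 𝕜}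
    (hC : C.submatrix (Equiv.prodAssoc α γ δ) (Equiv.prodAssoc α γ δ) ∈
      separableCone 𝕜 (α × γ) δ)
    {Y : Matrix (γ × β) (γ × β) 𝕜} (hY : Y ∈ separableCone 𝕜 γ β)
    {E : Matrix (α × β × δ) (α × β × δ) 𝕜}
    (hE : ∀ x y, E x y = ∑ c, ∑ c',
      C (x.1, c, x.2.2) (y.1, c', y.2.2) * Y (c, x.2.1) (c', y.2.1)) :
    E ∈ separableCone 𝕜 α (β × δ) := by
  have hE_contract : E = contract (C.submatrix (Equiv.prodAssoc α γ δ) (Equiv.prodAssoc α γ δ)) Y :=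
    Matrix.ext hE
  exact hE_contract ▸ contract_mem_separableCone hC hY

end Separability

/-- Separability preservation: the contraction of a matrix separable across
`(A'×A):B'` with one separable across `A:B` is separable across `A':(B×B')`. -/
theorem contraction_preserves_separability
    {A' A B' B : Type*} [Fintype A'] [Fintype A] [Fintype B'] [Fintype B]
    (C : Matrix (A' × A × B') (A' × A × B') ℂ)
    (hCsep : ∃ (n : ℕ) (P : Fin n → Matrix (A' × A) (A' × A) ℂ)
        (Q : Fin n → Matrix B' B' ℂ),
      (∀ i, (P i).PosSemidef) ∧ (∀ i, (Q i).PosSemidef) ∧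
      ∀ x y : A' × A × B',
        C x y = ∑ i, P i (x.1, x.2.1) (y.1, y.2.1) * Q i x.2.2 y.2.2)
    (Y : Matrix (A × B) (A × B) ℂ) (hYsep : InSepCone Y)
    (E : Matrix (A' × B × B') (A' × B × B') ℂ)
    (hE : ∀ x y, E x y = ∑ a : A, ∑ a2 : A,
      C (x.1, a, x.2.2) (y.1, a2, y.2.2) * Y (a, x.2.1) (a2, y.2.1)) :
    ∃ (m : ℕ) (R : Fin m → Matrix A' A' ℂ)
        (W : Fin m → Matrix (B × B') (B × B') ℂ),
      (∀ i, (R i).PosSemidef) ∧ (∀ i, (W i).PosSemidef) ∧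
      ∀ x y : A' × B × B', E x y = ∑ i, R i x.1 y.1 * W i x.2 y.2 := by
  refine mem_separableCone_iff.1 <| contraction_preserves_separability_general
    (mem_separableCone_iff.2 ?_) (mem_separableCone_iff.2 hYsep) hE
  simpa only [Prod.forall, submatrix_apply, Equiv.prodAssoc_apply] using hCsep
end
end

section
/- Let A and B be finite nonempty types and let ρ : Matrix (A × B) (A × B) ℂ be positive semidefinite with trace ρ = 1 and with T_B(ρ) positive semidefinite (i.e., ρ is a PPT state). Then sInf {t : ℝ | ∃ C D, C.PosSemidef ∧ D.PosSemidef ∧ ρ ≤ T_B(C − D) ∧ t = Re(trace(C + D))} = 1. (Hence the max-Rains relative entropy R_max(A;B)_ρ = log₂ of this value vanishes for PPT states, the fact used for the initial state in the strong-converse proof.) -/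
open Matrix ComplexOrder Kronecker

noncomputable section

section PartialTranspose

variable {α β : Type*}

@[simp]
theorem ptSnd_ptSnd (X : Matrix (α × β) (α × β) ℂ) : ptSnd (ptSnd X) = X := rfl

@[simp]
theorem trace_ptSnd [Fintype α] [Fintype β] (X : Matrix (α × β) (α × β) ℂ) :
    (ptSnd X).trace = X.trace := rfl

theorem trace_le_trace_add_of_posSemidef_ptSnd_sub [Fintype α] [Fintype β]
    {ρ C D : Matrix (α × β) (α × β) ℂ} (hD : D.PosSemidef)
    (hCD : (ptSnd (C - D) - ρ).PosSemidef) : ρ.trace ≤ (C + D).trace :=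
  calc
    ρ.trace ≤ (ptSnd (C - D)).trace := by
      simpa only [trace_sub, sub_nonneg] using hCD.trace_nonneg
    _ = C.trace - D.trace := by rw [trace_ptSnd, trace_sub]
    _ ≤ C.trace := sub_le_self _ hD.trace_nonneg
    _ ≤ C.trace + D.trace := le_add_of_nonneg_right hD.trace_nonneg
    _ = (C + D).trace := (trace_add C D).symm

end PartialTranspose

theorem max_rains_sdp_value_of_ppt_state_general
    {A B : Type*} [Fintype A] [Fintype B]
    (ρ : Matrix (A × B) (A × B) ℂ) (hPPT : (ptSnd ρ).PosSemidef) :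
    IsLeast {t : ℝ | ∃ C D : Matrix (A × B) (A × B) ℂ,
        C.PosSemidef ∧ D.PosSemidef ∧ (ptSnd (C - D) - ρ).PosSemidef ∧
        t = ((C + D).trace).re} ρ.trace.re := by
  constructor
  · have feasible : (ptSnd (ptSnd ρ - 0) - ρ).PosSemidef := by
      simpa only [sub_zero, ptSnd_ptSnd, sub_self] using PosSemidef.zero
    exact ⟨ptSnd ρ, 0, hPPT, PosSemidef.zero, feasible, by rw [add_zero, trace_ptSnd]⟩
  · rintro _ ⟨C, D, -, hD, hCD, rfl⟩
    exact Complex.re_le_re (trace_le_trace_add_of_posSemidef_ptSnd_sub hD hCD)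

/-- For a PPT state `ρ`, the SDP value `W(A;B)_ρ` equals `1`, so the
max-Rains relative entropy vanishes. -/
theorem max_rains_sdp_value_of_ppt_state
    {A B : Type*} [Fintype A] [Fintype B] [Nonempty A] [Nonempty B]
    (ρ : Matrix (A × B) (A × B) ℂ) (hρ : ρ.PosSemidef) (hTr : ρ.trace = 1)
    (hPPT : (ptSnd ρ).PosSemidef) :
    sInf {t : ℝ | ∃ C D : Matrix (A × B) (A × B) ℂ,
        C.PosSemidef ∧ D.PosSemidef ∧ (ptSnd (C - D) - ρ).PosSemidef ∧
        t = ((C + D).trace).re} = 1 := by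
  rw [(max_rains_sdp_value_of_ppt_state_general ρ hPPT).csInf_eq, hTr, Complex.one_re]
end
end
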